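/- For every realization Y ∈ ℝⁿ, ‖β̃ − β̂(U)‖² = λ̂²‖β̂(R) − β̂(U)‖² ≤ λ_min(X'X)⁻¹ α⁻¹ σ² exp(4αk₂), where λ_min(X'X) denotes the smallest eigenvalue of X'X; in particular the difference between β̃ and β̂(U) is bounded in norm by a deterministic constant times σ λ_min(X'X)^{−1/2}. -/

import Mathlib

open MeasureTheory Matrix Real Filter Topology ENNReal NNReal

noncomputable section

/-- Euclidean norm of a finite tuple. -/
def enorm2 {ι : Type*} [Fintype ι] (v : ι → ℝ) : ℝ := Real.sqrt (∑ i, v i ^ 2)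

/-- The `N(0, σ² I)` distribution on `ι → ℝ`, given by its Lebesgue density. -/
def gaussPi (ι : Type*) [Fintype ι] (σ2 : ℝ) : Measure (ι → ℝ) :=
  volume.withDensity fun x => ENNReal.ofReal
    ((2 * π * σ2) ^ (-(Fintype.card ι : ℝ) / 2) * Real.exp (-(enorm2 x) ^ 2 / (2 * σ2)))

/-- The Lebesgue density of the `N(0, σ² Q⁻¹)` distribution on `ι → ℝ`
(for `Q` symmetric positive definite). -/
def gaussCovDens {ι : Type*} [Fintype ι] [DecidableEq ι] (σ2 : ℝ) (Q : Matrix ι ι ℝ)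
    (x : ι → ℝ) : ℝ :=
  (2 * π * σ2) ^ (-(Fintype.card ι : ℝ) / 2) * Real.sqrt Q.det *
    Real.exp (-(x ⬝ᵥ Q.mulVec x) / (2 * σ2))

/-- The `N(0, σ² Q⁻¹)` distribution on `ι → ℝ` (for `Q` symmetric positive definite),
given by its Lebesgue density. -/
def gaussCov {ι : Type*} [Fintype ι] [DecidableEq ι] (σ2 : ℝ) (Q : Matrix ι ι ℝ) :
    Measure (ι → ℝ) :=
  volume.withDensity fun x => ENNReal.ofReal (gaussCovDens σ2 Q x)

open Classical in
/-- Symmetric positive semidefinite square root (junk value `0` off the psd cone). -/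
def msqrt {ι : Type*} [Fintype ι] [DecidableEq ι] (A : Matrix ι ι ℝ) : Matrix ι ι ℝ :=
  if h : A.PosSemidef then
    h.1.eigenvectorUnitary.1 * Matrix.diagonal (Real.sqrt ∘ h.1.eigenvalues) *
      (star h.1.eigenvectorUnitary : Matrix ι ι ℝ)
  else 0

open Classical in
/-- Smallest eigenvalue of a symmetric matrix (junk value `0` otherwise). -/
def lamMin {ι : Type*} [Fintype ι] [DecidableEq ι] (A : Matrix ι ι ℝ) : ℝ :=
  if h : A.IsHermitian then ⨅ i, h.eigenvalues i else 0

open Classical in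
/-- Largest eigenvalue of a symmetric matrix (junk value `0` otherwise). -/
def lamMax {ι : Type*} [Fintype ι] [DecidableEq ι] (A : Matrix ι ι ℝ) : ℝ :=
  if h : A.IsHermitian then ⨆ i, h.eigenvalues i else 0

variable {n k₁ k₂ : ℕ}

/-- First block of columns of the design matrix. -/
def X1 (X : Matrix (Fin n) (Fin k₁ ⊕ Fin k₂) ℝ) : Matrix (Fin n) (Fin k₁) ℝ :=
  X.submatrix id Sum.inl

/-- Second block of columns of the design matrix. -/
def X2 (X : Matrix (Fin n) (Fin k₁ ⊕ Fin k₂) ℝ) : Matrix (Fin n) (Fin k₂) ℝ :=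
  X.submatrix id Sum.inr

/-- Unrestricted least squares estimator. -/
def betaU (X : Matrix (Fin n) (Fin k₁ ⊕ Fin k₂) ℝ) (Y : Fin n → ℝ) : (Fin k₁ ⊕ Fin k₂) → ℝ :=
  (Xᵀ * X)⁻¹.mulVec (Xᵀ.mulVec Y)

/-- Restricted least squares estimator. -/
def betaR (X : Matrix (Fin n) (Fin k₁ ⊕ Fin k₂) ℝ) (Y : Fin n → ℝ) : (Fin k₁ ⊕ Fin k₂) → ℝ :=
  Sum.elim (((X1 X)ᵀ * X1 X)⁻¹.mulVec ((X1 X)ᵀ.mulVec Y)) (fun _ => 0)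

/-- Risk estimate of the restricted model. -/
def rR (X : Matrix (Fin n) (Fin k₁ ⊕ Fin k₂) ℝ) (σ2 : ℝ) (Y : Fin n → ℝ) : ℝ :=
  Y ⬝ᵥ Y - betaR X Y ⬝ᵥ (Xᵀ * X).mulVec (betaR X Y) + σ2 * (2 * k₁ - n)

/-- Risk estimate of the unrestricted model. -/
def rU (X : Matrix (Fin n) (Fin k₁ ⊕ Fin k₂) ℝ) (σ2 : ℝ) (Y : Fin n → ℝ) : ℝ :=
  Y ⬝ᵥ Y - betaU X Y ⬝ᵥ (Xᵀ * X).mulVec (betaU X Y) + σ2 * (2 * (k₁ + k₂) - n)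

/-- The model averaging weight `λ̂`. -/
def lamHat (α σ2 : ℝ) (X : Matrix (Fin n) (Fin k₁ ⊕ Fin k₂) ℝ) (Y : Fin n → ℝ) : ℝ :=
  Real.exp (-(α * rR X σ2 Y) / σ2) /
    (Real.exp (-(α * rR X σ2 Y) / σ2) + Real.exp (-(α * rU X σ2 Y) / σ2))

/-- Leung and Barron's model averaging estimator `β̃`. -/
def mavg (α σ2 : ℝ) (X : Matrix (Fin n) (Fin k₁ ⊕ Fin k₂) ℝ) (Y : Fin n → ℝ) :
    (Fin k₁ ⊕ Fin k₂) → ℝ :=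
  lamHat α σ2 X Y • betaR X Y + (1 - lamHat α σ2 X Y) • betaU X Y

/-- Projection on the column space of `X₁`. -/
def projR (X : Matrix (Fin n) (Fin k₁ ⊕ Fin k₂) ℝ) : Matrix (Fin n) (Fin n) ℝ :=
  X1 X * ((X1 X)ᵀ * X1 X)⁻¹ * (X1 X)ᵀ

/-- Projection on the column space of `X`. -/
def projU (X : Matrix (Fin n) (Fin k₁ ⊕ Fin k₂) ℝ) : Matrix (Fin n) (Fin n) ℝ :=
  X * (Xᵀ * X)⁻¹ * Xᵀ

/-- The distribution `P_{n,β,σ}` of `Y = Xβ + u`, `u ~ N(0, σ² Iₙ)`. -/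
def Pmeas (X : Matrix (Fin n) (Fin k₁ ⊕ Fin k₂) ℝ) (β : (Fin k₁ ⊕ Fin k₂) → ℝ) (σ2 : ℝ) :
    Measure (Fin n → ℝ) :=
  (gaussPi (Fin n) σ2).map (fun u => X.mulVec β + u)

/-- The function `h_{a,b}(ξ) = ξ / (1 + a exp(−ξ²/b))`. -/
def hfun (a b ξ : ℝ) : ℝ := ξ / (1 + a * Real.exp (-ξ ^ 2 / b))

/-- The inverse `g_{a,b}` of `h_{a,b}`. -/
def gfun (a b : ℝ) : ℝ → ℝ := Function.invFun (hfun a b)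

open Classical in
/-- `g(‖w‖) w / ‖w‖`, with the convention that this is `0` for `w = 0`. -/
def gdir (a b : ℝ) {ι : Type*} [Fintype ι] (w : ι → ℝ) : ι → ℝ :=
  if w = 0 then 0 else (gfun a b (enorm2 w) / enorm2 w) • w


/-- The finite-sample density `f_{n,β,σ}` of `√n(β̃ − β)` (Theorem 3 of the paper). -/
def fdens {n k₁ k₂ : ℕ} (X : Matrix (Fin n) (Fin k₁ ⊕ Fin k₂) ℝ)
    (β : (Fin k₁ ⊕ Fin k₂) → ℝ) (σ2 α : ℝ) (t : (Fin k₁ ⊕ Fin k₂) → ℝ) : ℝ :=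
  let a := Real.exp (2 * α * k₂)
  let b := σ2 / α
  let S := (X2 X)ᵀ * (1 - projR X) * X2 X
  let w := (Real.sqrt n)⁻¹ • (msqrt S).mulVec ((t ∘ Sum.inr) + Real.sqrt n • (β ∘ Sum.inr))
  (2 * π * σ2) ^ (-((k₁ : ℝ) + k₂) / 2) * Real.sqrt (((n : ℝ)⁻¹ • (Xᵀ * X)).det) *
    Real.exp (-(enorm2 ((Real.sqrt n)⁻¹ •
        ((msqrt ((X1 X)ᵀ * X1 X)).mulVec (t ∘ Sum.inl) +
          ((msqrt ((X1 X)ᵀ * X1 X))⁻¹ * (X1 X)ᵀ * X2 X).mulVec (t ∘ Sum.inr)))) ^ 2 /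
      (2 * σ2)) *
    (1 + Real.exp (-(α / σ2) * gfun a b (enorm2 w) ^ 2 + 2 * α * k₂)) ^ (k₂ : ℕ) *
    (1 + (2 * α / σ2) * gfun a b (enorm2 w) ^ 2 *
        (1 + Real.exp ((α / σ2) * gfun a b (enorm2 w) ^ 2 - 2 * α * k₂))⁻¹)⁻¹ *
    Real.exp (-(enorm2 (gdir a b w - (msqrt S).mulVec (β ∘ Sum.inr))) ^ 2 / (2 * σ2))

/-- The density `f_{∞,γ}` of the limiting distribution (formula (13) of the paper),
stated for a general symmetric positive definite matrix in place of `Q`. -/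
def fInfty {k₁ k₂ : ℕ} (Q : Matrix (Fin k₁ ⊕ Fin k₂) (Fin k₁ ⊕ Fin k₂) ℝ) (σ2 α : ℝ)
    (γ : Fin k₂ → ℝ) (t : (Fin k₁ ⊕ Fin k₂) → ℝ) : ℝ :=
  let a := Real.exp (2 * α * k₂)
  let b := σ2 / α
  let S := Q.toBlocks₂₂ - Q.toBlocks₂₁ * Q.toBlocks₁₁⁻¹ * Q.toBlocks₁₂
  let w := (msqrt S).mulVec ((t ∘ Sum.inr) + γ)
  (2 * π * σ2) ^ (-((k₁ : ℝ) + k₂) / 2) * Real.sqrt Q.det *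
    Real.exp (-(enorm2 ((msqrt Q.toBlocks₁₁).mulVec (t ∘ Sum.inl) +
        ((msqrt Q.toBlocks₁₁)⁻¹ * Q.toBlocks₁₂).mulVec (t ∘ Sum.inr))) ^ 2 / (2 * σ2)) *
    (1 + Real.exp (-(α / σ2) * gfun a b (enorm2 w) ^ 2 + 2 * α * k₂)) ^ (k₂ : ℕ) *
    (1 + (2 * α / σ2) * gfun a b (enorm2 w) ^ 2 *
        (1 + Real.exp ((α / σ2) * gfun a b (enorm2 w) ^ 2 - 2 * α * k₂))⁻¹)⁻¹ *
    Real.exp (-(enorm2 (gdir a b w - (msqrt S).mulVec γ)) ^ 2 / (2 * σ2))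


/-!
Put `δ = β̂(R) − β̂(U)` and `D = δ'X'Xδ`. By the normal equations, `X β̂(R)` is the orthogonal
projection of the fitted vector `X β̂(U)` onto the columns of `X₁`, so Pythagoras turns the
difference of the risk estimates into `D − 2σ²k₂`. Hence `λ̂` is the logistic function at
`2αk₂ − t` with `t = αD/σ²`, which is at most `exp (2αk₂ − t)`: the weight of the restricted model
decays exponentially in `t`, while `‖δ‖² ≤ λ_min(X'X)⁻¹ D` grows only linearly in `t`.
-/

section Matrix

open scoped MatrixOrder

variable {m ι : Type*} [Fintype ι]

lemma enorm2_sq (v : ι → ℝ) : enorm2 v ^ 2 = v ⬝ᵥ v := by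
  rw [enorm2, sq_sqrt (Finset.sum_nonneg fun i _ => sq_nonneg (v i))]
  simp only [dotProduct, sq]

lemma enorm2_smul_sq (c : ℝ) (v : ι → ℝ) : enorm2 (c • v) ^ 2 = c ^ 2 * enorm2 v ^ 2 := by
  rw [enorm2_sq, enorm2_sq, smul_dotProduct, dotProduct_smul, smul_eq_mul, smul_eq_mul]
  ring

lemma lamMin_le_eigenvalues [DecidableEq ι] {A : Matrix ι ι ℝ} (hA : A.IsHermitian) (i : ι) :
    lamMin A ≤ hA.eigenvalues i := by
  rw [lamMin, dif_pos hA]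
  exact ciInf_le (Set.finite_range _).bddBelow i

lemma lamMin_pos [DecidableEq ι] [Nonempty ι] {A : Matrix ι ι ℝ} (hA : A.PosDef) :
    0 < lamMin A := by
  rw [lamMin, dif_pos hA.isHermitian]
  obtain ⟨i, hi⟩ := exists_eq_ciInf_of_finite (f := hA.isHermitian.eigenvalues)
  exact hi ▸ hA.eigenvalues_pos i

lemma algebraMap_lamMin_le [DecidableEq ι] {A : Matrix ι ι ℝ} (hA : A.IsHermitian) :
    algebraMap ℝ (Matrix ι ι ℝ) (lamMin A) ≤ A := by
  rw [algebraMap_le_iff_le_spectrum hA, hA.spectrum_real_eq_range_eigenvalues]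
  rintro _ ⟨i, rfl⟩
  exact lamMin_le_eigenvalues hA i

lemma lamMin_mul_enorm2_sq_le [DecidableEq ι] {A : Matrix ι ι ℝ} (hA : A.IsHermitian)
    (v : ι → ℝ) : lamMin A * enorm2 v ^ 2 ≤ v ⬝ᵥ A *ᵥ v := by
  have h := (Matrix.le_iff.mp (algebraMap_lamMin_le hA)).dotProduct_mulVec_nonneg v
  rw [star_trivial, sub_mulVec, dotProduct_sub, Algebra.algebraMap_eq_smul_one, smul_mulVec,
    one_mulVec, dotProduct_smul, smul_eq_mul, ← enorm2_sq] at h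
  exact sub_nonneg.mp h

variable {R : Type*}

lemma mulVec_injective_of_rank_eq_card [CommRing R] [Nontrivial R] {A : Matrix m ι R}
    (hA : A.rank = Fintype.card ι) : Function.Injective A.mulVec := by
  rw [mulVec_injective_iff, linearIndependent_iff_card_eq_finrank_span, Set.finrank,
    ← rank_eq_finrank_span_cols, hA]

lemma mulVec_submatrix_id_injective [CommRing R] {κ : Type*} [Fintype κ] {A : Matrix m ι R}
    (hA : Function.Injective A.mulVec) {f : κ → ι} (hf : Function.Injective f) :
    Function.Injective (A.submatrix id f).mulVec :=
  mulVec_injective_iff.mpr ((mulVec_injective_iff.mp hA).comp f hf)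

variable [Fintype m]

lemma posDef_transpose_mul_self {A : Matrix m ι ℝ}
    (hA : Function.Injective A.mulVec) : (Aᵀ * A).PosDef :=
  PosDef.conjTranspose_mul_self A hA

lemma dotProduct_transpose_mul_self_mulVec [CommSemiring R] (A : Matrix m ι R) (v w : ι → R) :
    v ⬝ᵥ (Aᵀ * A) *ᵥ w = A *ᵥ v ⬝ᵥ A *ᵥ w := by
  rw [← mulVec_mulVec, dotProduct_transpose_mulVec, dotProduct_comm]

/-- The least squares coefficients of the regression of `y` on the columns of `A`, given by the
normal equations; meaningless when the Gram matrix `Aᵀ * A` is singular. -/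
def leastSquares [CommRing R] [DecidableEq ι] (A : Matrix m ι R) (y : m → R) : ι → R :=
  (Aᵀ * A)⁻¹ *ᵥ Aᵀ *ᵥ y

lemma mulVec_dotProduct_mulVec_leastSquares [CommRing R] [DecidableEq ι]
    {A : Matrix m ι R} (hA : IsUnit (Aᵀ * A)) (y : m → R) (v : ι → R) :
    A *ᵥ v ⬝ᵥ A *ᵥ leastSquares A y = A *ᵥ v ⬝ᵥ y := by
  rw [← dotProduct_transpose_mul_self_mulVec, leastSquares, mulVec_mulVec,
    mul_nonsing_inv _ ((isUnit_iff_isUnit_det _).mp hA), one_mulVec, dotProduct_transpose_mulVec,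
    dotProduct_comm]

lemma sub_dotProduct_sub_self_of_dotProduct_eq [CommRing R] {p q : m → R}
    (h : p ⬝ᵥ q = p ⬝ᵥ p) :
    (p - q) ⬝ᵥ (p - q) = q ⬝ᵥ q - p ⬝ᵥ p := by
  rw [sub_dotProduct, dotProduct_sub, dotProduct_sub, dotProduct_comm q p, h]
  ring

end Matrix

section Weight

lemma sigmoid_le_exp (x : ℝ) : sigmoid x ≤ exp x := by
  rw [sigmoid_def, inv_le_comm₀ (by positivity) (exp_pos x), ← exp_neg]
  linarith

lemma le_exp_sq (t : ℝ) : t ≤ exp t ^ 2 := by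
  nlinarith [add_one_le_exp t, sq_nonneg (exp t - 1 / 2)]

lemma sigmoid_sub_sq_mul_le (c t : ℝ) : sigmoid (c - t) ^ 2 * t ≤ exp c ^ 2 :=
  calc sigmoid (c - t) ^ 2 * t
      ≤ sigmoid (c - t) ^ 2 * exp t ^ 2 := by gcongr; exact le_exp_sq t
    _ ≤ exp (c - t) ^ 2 * exp t ^ 2 := by
        gcongr
        exacts [sigmoid_nonneg _, sigmoid_le_exp _]
    _ = exp c ^ 2 := by rw [← mul_pow, ← exp_add, sub_add_cancel]

lemma exp_div_exp_add_exp (x y : ℝ) : exp x / (exp x + exp y) = sigmoid (x - y) := by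
  rw [sigmoid_def, neg_sub, exp_sub]
  field_simp

end Weight

section Averaging

variable {X : Matrix (Fin n) (Fin k₁ ⊕ Fin k₂) ℝ}

lemma X1_mulVec_injective (hX : Function.Injective X.mulVec) :
    Function.Injective (X1 X).mulVec :=
  mulVec_submatrix_id_injective hX Sum.inl_injective

lemma mulVec_betaR (X : Matrix (Fin n) (Fin k₁ ⊕ Fin k₂) ℝ) (Y : Fin n → ℝ) :
    X *ᵥ betaR X Y = X1 X *ᵥ leastSquares (X1 X) Y := by
  have hX : fromCols (X1 X) (X2 X) = X := fromCols_toCols X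
  have h := fromCols_mulVec_sumElim (X1 X) (X2 X) (leastSquares (X1 X) Y) 0
  rwa [hX, mulVec_zero, add_zero] at h

lemma mulVec_betaR_dotProduct_mulVec_betaU (hX : Function.Injective X.mulVec) (Y : Fin n → ℝ) :
    X *ᵥ betaR X Y ⬝ᵥ X *ᵥ betaU X Y = X *ᵥ betaR X Y ⬝ᵥ X *ᵥ betaR X Y :=
  calc X *ᵥ betaR X Y ⬝ᵥ X *ᵥ betaU X Y
      = X *ᵥ betaR X Y ⬝ᵥ Y :=
        mulVec_dotProduct_mulVec_leastSquares (posDef_transpose_mul_self hX).isUnit Y _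
    _ = X *ᵥ betaR X Y ⬝ᵥ X *ᵥ betaR X Y := by
        rw [mulVec_betaR, mulVec_dotProduct_mulVec_leastSquares
          (posDef_transpose_mul_self (X1_mulVec_injective hX)).isUnit]

lemma rR_sub_rU (hX : Function.Injective X.mulVec) (σ2 : ℝ) (Y : Fin n → ℝ) :
    rR X σ2 Y - rU X σ2 Y =
      (betaR X Y - betaU X Y) ⬝ᵥ (Xᵀ * X) *ᵥ (betaR X Y - betaU X Y) - 2 * σ2 * k₂ := by
  have pythagoras := sub_dotProduct_sub_self_of_dotProduct_eq
    (mulVec_betaR_dotProduct_mulVec_betaU hX Y)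
  simp only [rR, rU, dotProduct_transpose_mul_self_mulVec]
  rw [mulVec_sub, pythagoras]
  ring

lemma lamHat_eq_sigmoid (hX : Function.Injective X.mulVec) {σ2 : ℝ} (hσ2 : σ2 ≠ 0) (α : ℝ)
    (Y : Fin n → ℝ) :
    lamHat α σ2 X Y = sigmoid (2 * α * k₂ -
      α / σ2 * ((betaR X Y - betaU X Y) ⬝ᵥ (Xᵀ * X) *ᵥ (betaR X Y - betaU X Y))) := by
  rw [lamHat, exp_div_exp_add_exp, eq_add_of_sub_eq (rR_sub_rU hX σ2 Y)]
  congr 1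
  field_simp
  ring

lemma mavg_sub_betaU (α σ2 : ℝ) (X : Matrix (Fin n) (Fin k₁ ⊕ Fin k₂) ℝ) (Y : Fin n → ℝ) :
    mavg α σ2 X Y - betaU X Y = lamHat α σ2 X Y • (betaR X Y - betaU X Y) := by
  rw [mavg]
  module

end Averaging

/-- for every realization `Y`,
`‖β̃ − β̂(U)‖² = λ̂²‖β̂(R) − β̂(U)‖² ≤ λ_min(X'X)⁻¹ α⁻¹ σ² exp(4αk₂)`. -/
theorem statement3 {n k₁ k₂ : ℕ} (hk₁ : 0 < k₁) (hk₂ : 0 < k₂) (hn : k₁ + k₂ ≤ n)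
    (X : Matrix (Fin n) (Fin k₁ ⊕ Fin k₂) ℝ) (hX : X.rank = k₁ + k₂)
    (σ α : ℝ) (hσ : 0 < σ) (hα : 0 < α) (Y : Fin n → ℝ) :
    (enorm2 (mavg α (σ ^ 2) X Y - betaU X Y)) ^ 2 =
      (lamHat α (σ ^ 2) X Y) ^ 2 * (enorm2 (betaR X Y - betaU X Y)) ^ 2 ∧
    (lamHat α (σ ^ 2) X Y) ^ 2 * (enorm2 (betaR X Y - betaU X Y)) ^ 2 ≤
      (lamMin (Xᵀ * X))⁻¹ * α⁻¹ * σ ^ 2 * Real.exp (4 * α * k₂) := by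
  have hX_inj : Function.Injective X.mulVec := mulVec_injective_of_rank_eq_card (by simpa using hX)
  have hPD := posDef_transpose_mul_self hX_inj
  have : Nonempty (Fin k₁ ⊕ Fin k₂) := ⟨Sum.inl ⟨0, hk₁⟩⟩
  have hL : 0 < lamMin (Xᵀ * X) := lamMin_pos hPD
  refine ⟨by rw [mavg_sub_betaU, enorm2_smul_sq], ?_⟩
  set D := (betaR X Y - betaU X Y) ⬝ᵥ (Xᵀ * X) *ᵥ (betaR X Y - betaU X Y) with hD
  have norm_le : enorm2 (betaR X Y - betaU X Y) ^ 2 ≤ (lamMin (Xᵀ * X))⁻¹ * D :=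
    (le_inv_mul_iff₀ hL).mpr (lamMin_mul_enorm2_sq_le hPD.isHermitian _)
  have weight_le : lamHat α (σ ^ 2) X Y ^ 2 * (α / σ ^ 2 * D) ≤ exp (2 * α * k₂) ^ 2 := by
    rw [lamHat_eq_sigmoid hX_inj (by positivity), ← hD]
    exact sigmoid_sub_sq_mul_le _ _
  calc lamHat α (σ ^ 2) X Y ^ 2 * enorm2 (betaR X Y - betaU X Y) ^ 2
      ≤ lamHat α (σ ^ 2) X Y ^ 2 * ((lamMin (Xᵀ * X))⁻¹ * D) := by gcongr
    _ = (lamMin (Xᵀ * X))⁻¹ * α⁻¹ * σ ^ 2 * (lamHat α (σ ^ 2) X Y ^ 2 * (α / σ ^ 2 * D)) := by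
        field_simp
    _ ≤ (lamMin (Xᵀ * X))⁻¹ * α⁻¹ * σ ^ 2 * exp (2 * α * k₂) ^ 2 := by gcongr
    _ = (lamMin (Xᵀ * X))⁻¹ * α⁻¹ * σ ^ 2 * exp (4 * α * k₂) := by
        rw [← exp_nat_mul]
        ring_nf

end
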